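/- arXiv:1301.1235 — 4 statements merged into one kernel-verified Lean document; each statement's English description precedes it below -/
import Mathlib

section
/- Suppose A ⊆ V is such that the vector field ∑_{v∈A} ∂_{p_v} belongs to 𝓜. Then the vector field ∑_{v∈A} ∂_{q_v} also belongs to 𝓜. -/
/-!
Bracketing the constant field `∑_{v∈A} ∂_{p_v}` with `X₀` differentiates `X₀` in a pure momentum
direction. The potential forces depend on positions only, so they do not contribute, and
`[∑_{v∈A} ∂_{p_v}, X₀] = ∑_{v∈A} ∂_{q_v} - ∑_{v∈A} γ_v ∂_{p_v}` (`lieB_dpSum_X0`).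
As `γ` vanishes off `V*`, the friction sum only involves fields `∂_{p_v}` with `v ∈ V*`, which
generate `𝓜`; adding it back leaves `∑_{v∈A} ∂_{q_v}`.
-/


open scoped Classical
open Polynomial

noncomputable section

/-- Phase space ℝ^{2|V|}: positions `q = x.1` and momenta `p = x.2`. -/
abbrev Phase (V : Type) := (V → ℝ) × (V → ℝ)

/-- Lie bracket of vector fields: `[Y,Z](x) = DZ(x)·Y(x) − DY(x)·Z(x)`. -/
def lieB {V : Type} [Fintype V] (Y Z : Phase V → Phase V) : Phase V → Phase V :=
  fun x => fderiv ℝ Z x (Y x) - fderiv ℝ Y x (Z x)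

/-- The constant vector field `∂_{p_v}`. -/
def dp {V : Type} [Fintype V] [DecidableEq V] (v : V) : Phase V → Phase V :=
  fun _ => (0, Pi.single v 1)

/-- The constant vector field `∂_{q_v}`. -/
def dq {V : Type} [Fintype V] [DecidableEq V] (v : V) : Phase V → Phase V :=
  fun _ => (Pi.single v 1, 0)

/-- The constant vector field `∑_{v ∈ A} ∂_{p_v}`. -/
def dpSum {V : Type} [Fintype V] [DecidableEq V] (A : Finset V) : Phase V → Phase V :=
  fun _ => (0, ∑ v ∈ A, Pi.single v 1)

/-- The constant vector field `∑_{v ∈ A} ∂_{q_v}`. -/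
def dqSum {V : Type} [Fintype V] [DecidableEq V] (A : Finset V) : Phase V → Phase V :=
  fun _ => (∑ v ∈ A, Pi.single v 1, 0)

/-- The drift vector field
`X₀ = −∑_{v∈V*} γ_v p_v ∂_{p_v} + ∑_{v∈V} (p_v ∂_{q_v} − U_v'(q_v) ∂_{p_v})
      − ∑_{{u,v}∈E} V_{uv}'(q_u − q_v)(∂_{p_u} − ∂_{p_v})`,
written componentwise (using the symmetry `V_{vu}(x) = V_{uv}(−x)` of the
interaction potentials, the `∂_{p_v}`-component of the edge term at a vertex `v` is
`−∑_{w ~ v} V_{vw}'(q_v − q_w)`). -/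
def X0 {V : Type} [Fintype V] [DecidableEq V] (G : SimpleGraph V) [DecidableRel G.Adj]
    (γ : V → ℝ) (U : V → ℝ → ℝ) (Vp : V → V → Polynomial ℝ) : Phase V → Phase V :=
  fun x =>
    (x.2, fun v =>
      -(γ v) * x.2 v - deriv (U v) (x.1 v) -
        ∑ w ∈ Finset.univ.filter (fun w => G.Adj v w),
          (derivative (Vp v w)).eval (x.1 v - x.1 w))

/-- The smallest collection `𝓜` of vector fields on `ℝ^{2|V|}` that contains `∂_{p_v}`
for every `v ∈ V*`, and is closed under linear combinations, Lie brackets,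
bracketing with `X₀`, and multiplication by smooth scalar functions. -/
inductive MM {V : Type} [Fintype V] [DecidableEq V] (Vstar : Finset V)
    (X₀ : Phase V → Phase V) : (Phase V → Phase V) → Prop
  | basic (v : V) (hv : v ∈ Vstar) : MM Vstar X₀ (dp v)
  | add {Y Z : Phase V → Phase V} : MM Vstar X₀ Y → MM Vstar X₀ Z → MM Vstar X₀ (Y + Z)
  | smul (a : ℝ) {Y : Phase V → Phase V} : MM Vstar X₀ Y → MM Vstar X₀ (a • Y)
  | lie {Y Z : Phase V → Phase V} : MM Vstar X₀ Y → MM Vstar X₀ Z → MM Vstar X₀ (lieB Y Z)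
  | lieX {Y : Phase V → Phase V} : MM Vstar X₀ Y → MM Vstar X₀ (lieB Y X₀)
  | mulS (f : Phase V → ℝ) (hf : ContDiff ℝ (⊤ : ℕ∞) f) {Y : Phase V → Phase V} :
      MM Vstar X₀ Y → MM Vstar X₀ (fun x => f x • Y x)

/-- A vertex `v` is controllable if `∂_{q_v} ∈ 𝓜` and `∂_{p_v} ∈ 𝓜`. -/
def Controllable {V : Type} [Fintype V] [DecidableEq V] (Vstar : Finset V)
    (X₀ : Phase V → Phase V) (v : V) : Prop :=
  MM Vstar X₀ (dq v) ∧ MM Vstar X₀ (dp v)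

/-- Two polynomials are equivalent if `f(·) = g(· + δ)` for some `δ ∈ ℝ`. -/
def PolyEquiv (f g : Polynomial ℝ) : Prop :=
  ∃ δ : ℝ, ∀ x : ℝ, f.eval x = g.eval (x + δ)

theorem differentiable_X0
    {V : Type} [Fintype V] [DecidableEq V] (G : SimpleGraph V) [DecidableRel G.Adj]
    (γ : V → ℝ) (U : V → ℝ → ℝ) (Vp : V → V → Polynomial ℝ)
    (hU : ∀ v, ContDiff ℝ (⊤ : ℕ∞) (U v)) : Differentiable ℝ (X0 G γ U Vp) := by
  have hd : ∀ v, Differentiable ℝ (deriv (U v)) := fun v =>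
    ((contDiff_infty_iff_deriv.1 (hU v)).2).differentiable (by simp)
  have hq : ∀ v, Differentiable ℝ (fun x : Phase V => x.1 v) := fun v => by fun_prop
  have hp : ∀ v, Differentiable ℝ (fun x : Phase V => x.2 v) := fun v => by fun_prop
  refine differentiable_snd.prodMk (differentiable_pi.2 fun v => ?_)
  refine (((hp v).const_mul _).sub ((hd v).comp (hq v))).sub ?_
  exact Differentiable.fun_sum fun w _ =>
    (derivative (Vp v w)).differentiable.comp ((hq v).sub (hq w))

/-- Along a pure momentum direction `X₀` is affine: the friction is linear and the potential forces
depend on the positions only. -/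
theorem fderiv_X0_momentum
    {V : Type} [Fintype V] [DecidableEq V] (G : SimpleGraph V) [DecidableRel G.Adj]
    (γ : V → ℝ) (U : V → ℝ → ℝ) (Vp : V → V → Polynomial ℝ)
    (hU : ∀ v, ContDiff ℝ (⊤ : ℕ∞) (U v)) (x : Phase V) (w : V → ℝ) :
    fderiv ℝ (X0 G γ U Vp) x (0, w) = (w, fun v => -γ v * w v) := by
  rw [← (differentiable_X0 G γ U Vp hU x).lineDeriv_eq_fderiv]
  have haff : ∀ t : ℝ, X0 G γ U Vp (x + t • (0, w))
      = X0 G γ U Vp x + t • ((w, fun v => -γ v * w v) : Phase V) := by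
    intro t
    ext v
    · simp [X0]
    · simp [X0]
      ring
  have h : HasDerivAt (fun t : ℝ => X0 G γ U Vp x + t • ((w, fun v => -γ v * w v) : Phase V))
      ((w, fun v => -γ v * w v) : Phase V) 0 := by
    simpa using ((hasDerivAt_id (0 : ℝ)).smul_const
      ((w, fun v => -γ v * w v) : Phase V)).const_add (X0 G γ U Vp x)
  simp only [lineDeriv, haff]
  exact h.deriv

theorem lieB_dpSum_X0
    {V : Type} [Fintype V] [DecidableEq V] (G : SimpleGraph V) [DecidableRel G.Adj]
    (γ : V → ℝ) (U : V → ℝ → ℝ) (Vp : V → V → Polynomial ℝ)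
    (hU : ∀ v, ContDiff ℝ (⊤ : ℕ∞) (U v)) (A : Finset V) :
    lieB (dpSum A) (X0 G γ U Vp) = dqSum A - ∑ v ∈ A, γ v • dp v := by
  funext x
  have hc : fderiv ℝ (dpSum A) x = 0 := by
    unfold dpSum
    simp
  rw [lieB, hc]
  simp only [dpSum, fderiv_X0_momentum G γ U Vp hU]
  ext v
  · simp [dqSum, dp, Prod.fst_sum]
  · simp [dqSum, dp, Prod.snd_sum, Finset.sum_apply, Pi.single_apply]
    split_ifs <;> simp

theorem MM.sum
    {V : Type} [Fintype V] [DecidableEq V] {Vstar : Finset V} {X₀ Y₀ : Phase V → Phase V}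
    (h₀ : MM Vstar X₀ Y₀) {ι : Type} (s : Finset ι) (F : ι → Phase V → Phase V)
    (hF : ∀ i ∈ s, MM Vstar X₀ (F i)) : MM Vstar X₀ (∑ i ∈ s, F i) := by
  refine Finset.sum_induction F _ (fun _ _ => MM.add) ?_ hF
  -- `𝓜` contains `0` only because it is nonempty, as witnessed by `Y₀`.
  simpa using MM.smul 0 h₀

/-- Lemma 3.1. If `∑_{v∈A} ∂_{p_v} ∈ 𝓜` then `∑_{v∈A} ∂_{q_v} ∈ 𝓜`. -/
theorem sum_dq_mem_of_sum_dp_mem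
    {V : Type} [Fintype V] [DecidableEq V] (G : SimpleGraph V) [DecidableRel G.Adj]
    (Vstar : Finset V) (γ : V → ℝ) (U : V → ℝ → ℝ) (Vp : V → V → Polynomial ℝ)
    (hγpos : ∀ v ∈ Vstar, 0 < γ v) (hγ0 : ∀ v ∉ Vstar, γ v = 0)
    (hU : ∀ v, ContDiff ℝ (⊤ : ℕ∞) (U v))
    (hsym : ∀ u v, G.Adj u v → ∀ x : ℝ, (Vp v u).eval x = (Vp u v).eval (-x))
    (hdeg : ∀ u v, G.Adj u v → 3 ≤ (Vp u v).natDegree)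
    (A : Finset V)
    (hA : MM Vstar (X0 G γ U Vp) (dpSum A)) :
    MM Vstar (X0 G γ U Vp) (dqSum A) := by
  have hfric : MM Vstar (X0 G γ U Vp) (∑ v ∈ A, γ v • dp v) := by
    refine MM.sum hA A _ fun v _ => ?_
    by_cases hv : v ∈ Vstar
    · exact MM.smul _ (MM.basic v hv)
    · rw [hγ0 v hv]
      simpa using MM.smul 0 hA
  have h := MM.add (MM.lieX hA) hfric
  rwa [lieB_dpSum_X0 G γ U Vp hU, sub_add_cancel] at h
end
end

section
/- Assume the vertex c is controllable. Then each equivalence class 𝒯_i of neighbors of c is jointly controllable, i.e. ∑_{v∈𝒯_i} ∂_{p_v} ∈ 𝓜 for every i. -/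
/-!
Write `x_v = q_c - q_v + δ_v`, where `δ_v` is the shift that makes `V''_{cv}` adjusted (no term
of second highest degree). To a tuple `g = (g_v)` of polynomials with `g_c = 0` attach the vector
field `∑_v g_v(x_v) ∂_{p_v}` (`tupleField`), and let `𝓖` be the linear space of those tuples whose
field lies in `𝓜` (`tupleSpace`).

* Bracketing with `∂_{q_c}` shows that `𝓖` is closed under `g ↦ g'`, and the double bracket
  `[g, [h, X₀]]` is the field of `(g h)'` (`lieB_lieB_X0`), so `𝓖` is closed
  under `(g, h) ↦ (g h)'`.
* `[∂_{q_c}, X₀]` shows that `𝓖` contains the tuple `f̃` of adjusted representatives of the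
  `V''_{cv}`, extended by zero outside `𝒯` (`adjusted_tuple_mem`).
* Two of the `V''_{cv}` are equivalent iff their adjusted representatives coincide
  (`polyEquiv_iff_adjRep_eq`).

It remains to see that the constant tuple `1` on `{v ∈ 𝒯 : f̃_v = f̃_{v₀}}`, `0` elsewhere, is
in `𝓖` (`class_indicator_mem`). The constant tuples `a` with `a, a X ∈ 𝓖` form a subspace closed
under products (`constPart`), hence by interpolation also under taking indicators of supports.
If `d` is the largest degree, the derivatives of `f̃` of orders `d` and `d - 1` are `β` and
`β X + γ`, with `β γ = 0` by adjustedness; so `β²` is in this algebra, and with it the indicator `e`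
of the set of components of degree `d`. The operator `g ↦ (e X g)'` acts on monomials with the
distinct eigenvalues `j + 1`, so all monomials of `e f̃` are separately in `𝓖`. The coefficients
then separate the classes of top degree; and `e f̃ ∈ 𝓖` allows subtracting the top-degree
components and arguing by induction on the set of remaining indices.
-/

open scoped Classical
open Polynomial

noncomputable section

/-- The set 𝒯 of neighbors ("targets") of a vertex `c`. -/
def Tset {V : Type} [Fintype V] [DecidableEq V] (G : SimpleGraph V) [DecidableRel G.Adj]
    (c : V) : Finset V :=
  Finset.univ.filter fun w => G.Adj c w

/-- The shift making a polynomial `g = ∑ a_i t^i/i!` of degree `k` adjusted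
(i.e. killing the coefficient `a_{k−1}`), namely `a_{k−1}/a_k = coeff_{k−1}/(k·coeff_k)`. -/
def adjShift (g : Polynomial ℝ) : ℝ :=
  g.coeff (g.natDegree - 1) / ((g.natDegree : ℝ) * g.leadingCoeff)

/-- The adjusted representation `g̃(·) = g(· − a_{k−1}/a_k)` of a polynomial `g`. -/
def adjRep (g : Polynomial ℝ) : Polynomial ℝ :=
  g.comp (Polynomial.X - Polynomial.C (adjShift g))

/-- `f̃_v`, the adjusted representation of `V''_{cv}`. -/
def ft {V : Type} (Vp : V → V → Polynomial ℝ) (c v : V) : Polynomial ℝ :=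
  adjRep (derivative (derivative (Vp c v)))

/-- `d = max_{v∈𝒯} d_v`, the maximal degree of the adjusted polynomials `f̃_v`, `v ∈ 𝒯`. -/
def dmax {V : Type} [Fintype V] [DecidableEq V] (G : SimpleGraph V) [DecidableRel G.Adj]
    (Vp : V → V → Polynomial ℝ) (c : V) : ℕ :=
  (Tset G c).sup fun v => (ft Vp c v).natDegree

/-- `D^d = {v ∈ 𝒯 : d_v = d}`, the neighbors of `c` of maximal adjusted degree. -/
def Dd {V : Type} [Fintype V] [DecidableEq V] (G : SimpleGraph V) [DecidableRel G.Adj]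
    (Vp : V → V → Polynomial ℝ) (c : V) : Finset V :=
  (Tset G c).filter fun v => (ft Vp c v).natDegree = dmax G Vp c

/-- The coefficient `b_{vℓ}` in `f̃_v(x) = ∑_j b_{vj} x^j/j!`, i.e. `b_{vℓ} = ℓ!·coeff_ℓ(f̃_v)`. -/
def bcoef {V : Type} (Vp : V → V → Polynomial ℝ) (c v : V) (ℓ : ℕ) : ℝ :=
  (Nat.factorial ℓ : ℝ) * (ft Vp c v).coeff ℓ

/-- The scalar function `x_v = q_c − q_v + δ_{cv}`, with `δ_{cv}` the adjusting shift
of `V''_{cv}`. -/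
def xv {V : Type} [Fintype V] (Vp : V → V → Polynomial ℝ) (c v : V) : Phase V → ℝ :=
  fun x => x.1 c - x.1 v + adjShift (derivative (derivative (Vp c v)))

/-! ### Spaces of polynomial tuples closed under derivatives of products -/

/-- The constant tuples `a` such that both `a` and `a · X` lie in `𝓖`. -/
def constPart {ι : Type} (𝓖 : Submodule ℝ (ι → ℝ[X])) : Submodule ℝ (ι → ℝ) where
  carrier := {a | (fun v => C (a v)) ∈ 𝓖 ∧ (fun v => C (a v) * X) ∈ 𝓖}
  add_mem' := by
    rintro a b ⟨ha, ha'⟩ ⟨hb, hb'⟩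
    refine ⟨?_, ?_⟩
    · convert 𝓖.add_mem ha hb using 1
      ext1 v; simp
    · convert 𝓖.add_mem ha' hb' using 1
      ext1 v; simp [add_mul]
  zero_mem' := by
    refine ⟨?_, ?_⟩ <;> convert 𝓖.zero_mem using 1 <;> ext1 v <;> simp
  smul_mem' := by
    rintro r a ⟨ha, ha'⟩
    refine ⟨?_, ?_⟩
    · convert 𝓖.smul_mem r ha using 1
      ext1 v; simp [smul_eq_C_mul]
    · convert 𝓖.smul_mem r ha' using 1
      ext1 v; simp [smul_eq_C_mul, mul_assoc]

/-- Closure of a space of polynomial tuples under `g ↦ g'` and `(g, h) ↦ (g h)'`. -/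
structure DerivClosed {ι : Type} (𝓖 : Submodule ℝ (ι → ℝ[X])) : Prop where
  deriv : ∀ g ∈ 𝓖, (fun v => derivative (g v)) ∈ 𝓖
  prod : ∀ g ∈ 𝓖, ∀ h ∈ 𝓖, (fun v => derivative (g v * h v)) ∈ 𝓖

section Algebra

variable {ι : Type} {𝓖 : Submodule ℝ (ι → ℝ[X])}

theorem constPart_mul (H : DerivClosed 𝓖) {a b : ι → ℝ} (ha : a ∈ constPart 𝓖)
    (hb : b ∈ constPart 𝓖) : (fun v => a v * b v) ∈ constPart 𝓖 := by
  refine ⟨?_, ?_⟩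
  · convert H.prod _ ha.1 _ hb.2 using 1
    ext1 v; simp
  · convert 𝓖.smul_mem (1 / 2 : ℝ) (H.prod _ ha.2 _ hb.2) using 1
    ext1 v
    have h4 : C (1 / 2 : ℝ) * 2 = 1 := by
      rw [show (2 : ℝ[X]) = C 2 from rfl, ← C_mul]; norm_num
    simp only [Pi.smul_apply, smul_eq_C_mul, derivative_mul, derivative_C, derivative_X, C_mul]
    linear_combination -C (a v) * C (b v) * X * h4

/-- Polynomial interpolation of `x ↦ 1/x` on the nonzero values of `a` shows that the indicator
of the support of `a` is a polynomial in `a` without constant term. -/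
theorem constPart_supp [Fintype ι] (H : DerivClosed 𝓖) {a : ι → ℝ} (ha : a ∈ constPart 𝓖) :
    (fun v => if a v = 0 then (0 : ℝ) else 1) ∈ constPart 𝓖 := by
  let s : Finset ℝ := Finset.univ.image a
  let q : ℝ[X] := Lagrange.interpolate s id (fun x => x⁻¹)
  have hq : ∀ v, q.eval (a v) = (a v)⁻¹ := fun v =>
    Lagrange.eval_interpolate_at_node (v := id) (fun x : ℝ => x⁻¹) (Function.injective_id.injOn)
      (Finset.mem_image_of_mem a (Finset.mem_univ v))
  have key : ∀ p : ℝ[X], (fun v => p.eval (a v) * a v) ∈ constPart 𝓖 := by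
    intro p
    induction p using Polynomial.induction_on' with
    | add p q hp hq =>
      convert (constPart 𝓖).add_mem hp hq using 1
      ext v; simp [add_mul]
    | monomial n r =>
      have : ∀ n : ℕ, (fun v => a v ^ n * a v) ∈ constPart 𝓖 := by
        intro n
        induction n with
        | zero => simpa using ha
        | succ n ih =>
          simpa only [pow_succ] using constPart_mul H ih ha
      convert (constPart 𝓖).smul_mem r (this n) using 1
      ext v; simp [mul_assoc]
  convert key q using 1
  ext v
  rw [hq]
  split_ifs with h
  · simp [h]
  · simp [h]

/-- For an indicator `e`, the operator `g ↦ (e X g)'` multiplies the coefficient of `X ^ i` by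
`(i + 1) e`; these eigenvalues are distinct and nonzero on the support of `e`, so each monomial
of `e g` is obtained separately. -/
theorem monomial_mem [Fintype ι] (H : DerivClosed 𝓖) {e : ι → ℝ} (he : e ∈ constPart 𝓖)
    (he01 : ∀ v, e v = 0 ∨ e v = 1) {g : ι → ℝ[X]} (hg : g ∈ 𝓖) (j : ℕ) :
    (fun v => C (e v * (g v).coeff j) * X ^ j) ∈ 𝓖 := by
  let L : Module.End ℝ (ι → ℝ[X]) :=
    { toFun := fun g v => derivative (C (e v) * X * g v)
      map_add' := by intro g h; ext1 v; simp only [Pi.add_apply, mul_add, derivative_add]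
      map_smul' := by
        intro r g; ext1 v
        simp only [Pi.smul_apply, mul_smul_comm, derivative_smul, RingHom.id_apply] }
  have hL : ∀ g ∈ 𝓖, L g ∈ 𝓖 := fun g hg => H.prod _ he.2 _ hg
  have hcoeff : ∀ g v i, (L g v).coeff i = ((i : ℝ) + 1) * e v * (g v).coeff i := by
    intro g v i
    change (derivative (C (e v) * X * g v)).coeff i = _
    rw [coeff_derivative, mul_assoc, coeff_C_mul, coeff_X_mul]
    ring
  have hpow : ∀ n : ℕ, ∀ g ∈ 𝓖, (L ^ n) g ∈ 𝓖 ∧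
      ∀ v i, ((L ^ n) g v).coeff i = (((i : ℝ) + 1) * e v) ^ n * (g v).coeff i := by
    intro n
    induction n with
    | zero => intro g hg; simpa using hg
    | succ n ih =>
      intro g hg
      rw [pow_succ', Module.End.mul_apply]
      refine ⟨hL _ (ih g hg).1, fun v i => ?_⟩
      rw [hcoeff, (ih g hg).2, pow_succ]; ring
  have hpoly : ∀ p : ℝ[X], ∀ g ∈ 𝓖, aeval L p g ∈ 𝓖 ∧
      ∀ v i, (aeval L p g v).coeff i = p.eval (((i : ℝ) + 1) * e v) * (g v).coeff i := by
    intro p g hg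
    induction p using Polynomial.induction_on' with
    | add p q hp hq =>
      simp only [map_add, LinearMap.add_apply, Pi.add_apply, coeff_add, eval_add]
      refine ⟨𝓖.add_mem hp.1 hq.1, fun v i => ?_⟩
      rw [hp.2, hq.2]; ring
    | monomial n r =>
      have h1 : aeval L (monomial n r) g = r • (L ^ n) g := by
        rw [aeval_monomial, Module.End.mul_apply, Module.algebraMap_end_apply]
      rw [h1]
      refine ⟨𝓖.smul_mem _ (hpow n g hg).1, fun v i => ?_⟩
      rw [Pi.smul_apply, coeff_smul, (hpow n g hg).2, eval_monomial, smul_eq_mul]; ring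
  obtain ⟨N, hN⟩ : ∃ N, ∀ v, (g v).natDegree < N :=
    ⟨(Finset.univ.sup fun v => (g v).natDegree) + 1, fun v =>
      Nat.lt_succ_of_le (Finset.le_sup (f := fun v => (g v).natDegree) (Finset.mem_univ v))⟩
  let q : ℝ[X] := Lagrange.interpolate (Finset.range N) (fun i : ℕ => (i : ℝ) + 1)
    (fun i => if i = j then ((i : ℝ) + 1)⁻¹ else 0)
  have hq : ∀ i < N, q.eval ((i : ℝ) + 1) = if i = j then ((i : ℝ) + 1)⁻¹ else 0 := by
    intro i hi
    refine Lagrange.eval_interpolate_at_node (v := fun i : ℕ => (i : ℝ) + 1)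
      (fun i => if i = j then ((i : ℝ) + 1)⁻¹ else 0) ?_ (Finset.mem_range.2 hi)
    intro x _ y _ hxy
    simpa using hxy
  convert (hpoly q _ (hL g hg)).1 using 1
  ext v i
  rw [(hpoly q _ (hL g hg)).2, hcoeff, coeff_C_mul_X_pow]
  rcases he01 v with h | h
  · simp [h]
  · rw [h]
    by_cases hi : i < N
    · simp only [mul_one, one_mul]
      rw [hq i hi]
      have : ((i : ℝ) + 1) ≠ 0 := by positivity
      split_ifs with hij
      · subst hij; field_simp
      · simp
    · have : (g v).coeff i = 0 := coeff_eq_zero_of_natDegree_lt (by have := hN v; omega)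
      split_ifs with hij
      · subst hij; simp [this]
      · simp [this]

theorem mem_constPart_of_X_pow (H : DerivClosed 𝓖) {a : ι → ℝ} (j : ℕ)
    (h : (fun v => C (a v) * X ^ (j + 1)) ∈ 𝓖) : a ∈ constPart 𝓖 := by
  induction j with
  | zero =>
    refine ⟨?_, by simpa using h⟩
    convert H.deriv _ h using 1
    ext1 v; simp
  | succ j ih =>
    apply ih
    convert 𝓖.smul_mem ((j : ℝ) + 2)⁻¹ (H.deriv _ h) using 1
    ext1 v
    have : ((j : ℝ) + 2) ≠ 0 := by positivity
    simp only [Pi.smul_apply, derivative_C_mul_X_pow, smul_eq_C_mul, ← mul_assoc, ← C_mul]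
    congr 2
    push_cast
    field_simp
    ring

theorem coeff_mem_constPart [Fintype ι] (H : DerivClosed 𝓖) {e : ι → ℝ} (he : e ∈ constPart 𝓖)
    (he01 : ∀ v, e v = 0 ∨ e v = 1) {g : ι → ℝ[X]} (hg : g ∈ 𝓖) {j : ℕ} (hj : 1 ≤ j) :
    (fun v => e v * (g v).coeff j) ∈ constPart 𝓖 := by
  obtain ⟨j, rfl⟩ := Nat.exists_eq_add_of_le' hj
  exact mem_constPart_of_X_pow H j (monomial_mem H he he01 hg _)

/-- If the tuple `F` has degrees at most `d`, and the components of exact degree `d` have no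
term of degree `d - 1`, the indicator of the set of components of exact degree `d` is
in `constPart 𝓖`. -/
theorem topDegree_mem [Fintype ι] (H : DerivClosed 𝓖) {F : ι → ℝ[X]} (hF : F ∈ 𝓖) {d : ℕ}
    (hd : 1 ≤ d) (hdeg : ∀ v, (F v).natDegree ≤ d)
    (hadj : ∀ v, (F v).coeff d ≠ 0 → (F v).coeff (d - 1) = 0) :
    (fun v => if (F v).coeff d = 0 then (0 : ℝ) else 1) ∈ constPart 𝓖 := by
  obtain ⟨k, rfl⟩ := Nat.exists_eq_add_of_le' hd
  have hiter : ∀ n : ℕ, (fun v => derivative^[n] (F v)) ∈ 𝓖 := by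
    intro n
    induction n with
    | zero => simpa using hF
    | succ n ih =>
      simp only [Function.iterate_succ_apply']
      exact H.deriv _ ih
  let β : ι → ℝ := fun v => ((k + 1).factorial : ℝ) * (F v).coeff (k + 1)
  let γ : ι → ℝ := fun v => (k.factorial : ℝ) * (F v).coeff k
  have hl : ∀ v, derivative^[k] (F v) = C (β v) * X + C (γ v) := by
    intro v
    ext i
    rw [coeff_iterate_derivative]
    rcases i with _ | _ | i
    · simp [γ, Nat.descFactorial_self]
    · have : (1 + k).descFactorial k = (k + 1).factorial := by
        have := Nat.factorial_mul_descFactorial (n := 1 + k) (k := k) (by omega)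
        rw [add_comm k 1, ← this]; simp
      rw [zero_add, this]
      simp [β, add_comm, coeff_C]
    · have : (F v).coeff (i + 1 + 1 + k) = 0 :=
        coeff_eq_zero_of_natDegree_lt (by have := hdeg v; omega)
      rw [this]
      simp
  have hβγ : ∀ v, β v * γ v = 0 := by
    intro v
    by_cases h : (F v).coeff (k + 1) = 0
    · simp [β, h]
    · have := hadj v h
      simp only [Nat.add_sub_cancel] at this
      simp [γ, this]
  have h1 : (fun v => C (β v) * X + C (γ v)) ∈ 𝓖 := by
    simpa only [hl] using hiter k
  have h0 : (fun v => C (β v)) ∈ 𝓖 := by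
    convert H.deriv _ h1 using 1
    ext1 v; simp
  have hβ2 : (fun v => β v * β v) ∈ constPart 𝓖 := by
    refine ⟨?_, ?_⟩
    · convert H.prod _ h0 _ h1 using 1
      ext1 v
      simp
    · convert 𝓖.smul_mem (1 / 2 : ℝ) (H.prod _ h1 _ h1) using 1
      ext1 v
      have h3 : C (β v) * C (γ v) = 0 := by rw [← C_mul, hβγ, C_0]
      have h4 : (C (1 / 2 : ℝ)) * 2 = 1 := by
        rw [show (2 : ℝ[X]) = C 2 from rfl, ← C_mul]; norm_num
      simp only [Pi.smul_apply, smul_eq_C_mul, derivative_mul, derivative_add, derivative_C,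
        derivative_X, C_mul]
      linear_combination (-2 * C (1/2 : ℝ)) * h3 - C (β v) * C (β v) * X * h4
  convert constPart_supp H hβ2 using 3 with v
  simp [β, Nat.factorial_ne_zero]

/-- The algebraic core: the class of `v₀` among the indices in `S` is isolated. Components of
top degree are isolated from one another by their coefficients and are then removed from `S`. -/
theorem class_indicator_mem [Fintype ι] [DecidableEq ι] (H : DerivClosed 𝓖) (f : ι → ℝ[X]) (S : Finset ι)
    (hdeg : ∀ v ∈ S, 1 ≤ (f v).natDegree)
    (hadj : ∀ v ∈ S, (f v).coeff ((f v).natDegree - 1) = 0)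
    (hS : (fun v => if v ∈ S then f v else 0) ∈ 𝓖) (v₀ : ι) (hv₀ : v₀ ∈ S) :
    (fun v => if v ∈ S ∧ f v = f v₀ then (1 : ℝ[X]) else 0) ∈ 𝓖 := by
  induction S using Finset.strongInduction with
  | H S ih =>
  obtain ⟨v₁, hv₁, hmax⟩ := Finset.exists_max_image S (fun v => (f v).natDegree) ⟨v₀, hv₀⟩
  obtain ⟨d, hd⟩ : ∃ d, d = (f v₁).natDegree := ⟨_, rfl⟩
  rw [← hd] at hmax
  have hd1 : 1 ≤ d := hd ▸ hdeg v₁ hv₁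
  set F : ι → ℝ[X] := fun v => if v ∈ S then f v else 0 with hFdef
  have hFS : ∀ v ∈ S, F v = f v := fun v hv => by simp [F, hv]
  have hFn : ∀ v ∉ S, F v = 0 := fun v hv => by simp [F, hv]
  have hFd : ∀ v, (F v).coeff d ≠ 0 ↔ v ∈ S ∧ (f v).natDegree = d := by
    intro v
    by_cases hv : v ∈ S
    · rw [hFS v hv]
      refine ⟨fun h => ⟨hv, le_antisymm (hmax v hv) (le_natDegree_of_ne_zero h)⟩, fun h => ?_⟩
      rw [← h.2, coeff_natDegree, Ne, leadingCoeff_eq_zero]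
      intro h0
      have := hdeg v hv
      simp [h0] at this
    · simp [hFn v hv, hv]
  set e : ι → ℝ := fun v => if (F v).coeff d = 0 then (0 : ℝ) else 1 with hedef
  have hFdeg : ∀ v, (F v).natDegree ≤ d := by
    intro v
    by_cases hv : v ∈ S
    · rw [hFS v hv]; exact hmax v hv
    · simp [hFn v hv]
  have hFadj : ∀ v, (F v).coeff d ≠ 0 → (F v).coeff (d - 1) = 0 := by
    intro v h
    obtain ⟨h1, h2⟩ := (hFd v).1 h
    rw [hFS v h1, ← h2]; exact hadj v h1
  have he : e ∈ constPart 𝓖 := topDegree_mem H hS hd1 hFdeg hFadj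
  have he01 : ∀ v, e v = 0 ∨ e v = 1 := by
    intro v; simp only [e]; split_ifs <;> simp
  have he1 : ∀ v, e v = 1 ↔ v ∈ S ∧ (f v).natDegree = d := by
    intro v; rw [← hFd]; simp [e]
  by_cases hv₀d : (f v₀).natDegree = d
  · -- `v₀` has top degree: separate by the coefficients one after the other.
    have hw : ∀ j, ∃ w ∈ constPart 𝓖, ∀ v, (e v = 0 → w v = 0) ∧
        (e v = 1 → (w v = 0 ↔ (f v).coeff j = (f v₀).coeff j)) := by
      intro j
      have hFe : ∀ v, e v = 1 → F v = f v := fun v hv => hFS v ((he1 v).1 hv).1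
      rcases Nat.eq_zero_or_pos j with rfl | hj
      · rcases Nat.lt_or_ge d 2 with hd2 | hd2
        · -- For `d = 1` the constant coefficient vanishes by adjustedness.
          refine ⟨0, (constPart 𝓖).zero_mem, fun v => ⟨fun _ => rfl, fun h => ?_⟩⟩
          have hz : ∀ u ∈ S, (f u).natDegree = d → (f u).coeff 0 = 0 := by
            intro u hu hud
            have := hadj u hu
            rwa [hud, show d - 1 = 0 by omega] at this
          rw [hz v ((he1 v).1 h).1 ((he1 v).1 h).2, hz v₀ hv₀ hv₀d]
          simp
        · -- For `d ≥ 2`, multiplying by the leading monomial moves the constant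
          -- coefficient to degree `d`, hence to degree `d - 1 ≥ 1` after differentiation.
          have h1 := monomial_mem H he he01 hS d
          have h2 := coeff_mem_constPart H he he01 (H.prod _ hS _ h1) (j := d - 1) (by omega)
          have h3 := coeff_mem_constPart H he he01 hS hd1
          refine ⟨_, (constPart 𝓖).sub_mem h2
            ((constPart 𝓖).smul_mem ((d : ℝ) * (f v₀).coeff 0) h3), fun v => ⟨fun h => ?_,
              fun h => ?_⟩⟩
          · simp [h]
          · have hne : (f v).coeff d ≠ 0 := by
              rw [← hFe v h]; exact (hFd v).2 ((he1 v).1 h)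
            have hc : (derivative (f v * (C ((f v).coeff d) * X ^ d))).coeff (d - 1)
                = d * ((f v).coeff 0 * (f v).coeff d) := by
              rw [coeff_derivative, show d - 1 + 1 = d by omega, mul_left_comm, coeff_C_mul]
              have : (f v * X ^ d).coeff d = (f v).coeff 0 := by
                simpa using coeff_mul_X_pow (f v) d 0
              rw [this, Nat.cast_sub hd1]; push_cast; ring
            have hd0 : (d : ℝ) ≠ 0 := by positivity
            change e v * (derivative (F v * (C (e v * (F v).coeff d) * X ^ d))).coeff (d - 1)
              - d * (f v₀).coeff 0 * (e v * (F v).coeff d) = 0 ↔ _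
            rw [h, hFe v h, one_mul, one_mul, hc]
            rw [show (d : ℝ) * ((f v).coeff 0 * (f v).coeff d)
              - d * (f v₀).coeff 0 * (f v).coeff d
              = d * (f v).coeff d * ((f v).coeff 0 - (f v₀).coeff 0) by ring]
            simp [hne, hd0, sub_eq_zero]
      · refine ⟨_, (constPart 𝓖).sub_mem (coeff_mem_constPart H he he01 hS hj)
          ((constPart 𝓖).smul_mem ((f v₀).coeff j) he), fun v => ⟨fun h => ?_, fun h => ?_⟩⟩
        · simp [h]
        · simp [h, hFe v h, sub_eq_zero]
    have hclass : ∀ n : ℕ, (fun v => if e v = 1 ∧ ∀ j < n, (f v).coeff j = (f v₀).coeff j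
        then (1 : ℝ) else 0) ∈ constPart 𝓖 := by
      intro n
      induction n with
      | zero =>
        convert he using 1
        ext v
        rcases he01 v with h | h <;> simp [h]
      | succ n ihn =>
        obtain ⟨w, hwA, hw⟩ := hw n
        convert constPart_mul H ihn ((constPart 𝓖).sub_mem he (constPart_supp H hwA)) using 1
        ext v
        simp only [Pi.sub_apply, Nat.lt_succ_iff_lt_or_eq, or_imp, forall_and, forall_eq]
        rcases he01 v with h | h
        · simp [h]
        · have := (hw v).2 h
          by_cases hh : (f v).coeff n = (f v₀).coeff n
          · simp [h, hh, this.2 hh]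
          · simp [h, hh, mt this.1 hh]
    convert (hclass (d + 1)).1 using 1
    ext1 v
    beta_reduce
    have hiff : (v ∈ S ∧ f v = f v₀) ↔
        (e v = 1 ∧ ∀ j < d + 1, (f v).coeff j = (f v₀).coeff j) := by
      rw [he1]
      constructor
      · rintro ⟨h1, h2⟩
        rw [h2]
        exact ⟨⟨h1, hv₀d⟩, fun _ _ => rfl⟩
      · rintro ⟨⟨h1, h2⟩, h3⟩
        refine ⟨h1, ?_⟩
        ext j
        by_cases hj : j < d + 1
        · exact h3 j hj
        · rw [coeff_eq_zero_of_natDegree_lt (by omega), coeff_eq_zero_of_natDegree_lt (by omega)]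
    by_cases h : v ∈ S ∧ f v = f v₀
    · rw [if_pos h, if_pos (hiff.1 h), C_1]
    · rw [if_neg h, if_neg (mt hiff.2 h), C_0]
  · -- `v₀` has lower degree: subtract the top-degree components and recurse.
    have heF : (fun v => C (e v) * F v) ∈ 𝓖 := by
      have := 𝓖.sum_mem (t := Finset.range (d + 1))
        (fun j _ => monomial_mem H he he01 hS j)
      convert this using 1
      ext1 v
      rw [Finset.sum_apply]
      conv_lhs => rw [as_sum_range_C_mul_X_pow' (F v) (Nat.lt_succ_of_le (hFdeg v))]
      rw [Finset.mul_sum]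
      refine Finset.sum_congr rfl fun j _ => ?_
      rw [C_mul, mul_assoc]
    have hsub := 𝓖.sub_mem hS heF
    let S' := S.filter fun v => (f v).natDegree ≠ d
    have hS'S : S' ⊂ S :=
      Finset.filter_ssubset.2 ⟨v₁, hv₁, by simp [hd]⟩
    have hmem : ∀ v, v ∈ S' ↔ v ∈ S ∧ (f v).natDegree ≠ d := fun v => by simp [S']
    convert ih S' hS'S (fun v hv => hdeg v ((hmem v).1 hv).1)
      (fun v hv => hadj v ((hmem v).1 hv).1) ?_ ((hmem _).2 ⟨hv₀, hv₀d⟩) using 1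
    · ext1 v
      have hiff : (v ∈ S ∧ f v = f v₀) ↔ (v ∈ S' ∧ f v = f v₀) := by
        rw [hmem]
        constructor
        · rintro ⟨h1, h2⟩; exact ⟨⟨h1, h2 ▸ hv₀d⟩, h2⟩
        · rintro ⟨⟨h1, _⟩, h2⟩; exact ⟨h1, h2⟩
      simp only [hiff]
    · convert hsub using 1
      ext1 v
      simp only [Pi.sub_apply, hmem]
      by_cases hv : v ∈ S
      · by_cases hvd : (f v).natDegree = d
        · simp [hv, hvd, (he1 v).2 ⟨hv, hvd⟩]
        · have : e v = 0 := (he01 v).resolve_right fun h => hvd ((he1 v).1 h).2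
          simp [hv, hvd, this, hFS]
      · simp [hv, hFn]

end Algebra

/-! ### Adjusted polynomials -/

section Adjusted

theorem coeff_taylor_pred (r : ℝ) (g : ℝ[X]) (hg : 1 ≤ g.natDegree) :
    (taylor r g).coeff (g.natDegree - 1) =
      g.coeff (g.natDegree - 1) + r * (g.natDegree * g.leadingCoeff) := by
  obtain ⟨n, hn⟩ := Nat.exists_eq_add_of_le' hg
  have hlt : (hasseDeriv n g).natDegree < 2 := by
    have := natDegree_hasseDeriv_le g n
    omega
  rw [taylor_coeff, hn, Nat.add_sub_cancel, eval_eq_sum_range' hlt, leadingCoeff, hn]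
  simp only [Finset.sum_range_succ, Finset.sum_range_zero, hasseDeriv_coeff]
  rw [add_comm 1 n]
  simp
  ring

theorem adjRep_eq_taylor (g : ℝ[X]) : adjRep g = taylor (-adjShift g) g := by
  rw [adjRep, taylor_apply, C_neg, sub_eq_add_neg]

theorem natDegree_adjRep (g : ℝ[X]) : (adjRep g).natDegree = g.natDegree := by
  rw [adjRep_eq_taylor, natDegree_taylor]

theorem coeff_adjRep_pred (g : ℝ[X]) (hg : 1 ≤ g.natDegree) :
    (adjRep g).coeff (g.natDegree - 1) = 0 := by
  have h1 : (g.natDegree : ℝ) ≠ 0 := by positivity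
  have h2 : g.leadingCoeff ≠ 0 := by
    rw [Ne, leadingCoeff_eq_zero]; rintro rfl; simp at hg
  rw [adjRep_eq_taylor, coeff_taylor_pred _ _ hg, adjShift]
  field_simp
  ring

/-- Equivalence up to translation is equality of adjusted representatives, since translating
an adjusted polynomial by a nonzero amount destroys adjustedness. -/
theorem polyEquiv_iff_adjRep_eq (f g : ℝ[X]) (hf : 1 ≤ f.natDegree) :
    PolyEquiv f g ↔ adjRep f = adjRep g := by
  constructor
  · rintro ⟨δ, h⟩
    have hfg : f = taylor δ g := by
      refine Polynomial.funext fun x => ?_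
      rw [taylor_eval, h]
    have hn : f.natDegree = g.natDegree := by rw [hfg, natDegree_taylor]
    have hg : 1 ≤ g.natDegree := hn ▸ hf
    have hl : f.leadingCoeff = g.leadingCoeff := by rw [hfg, leadingCoeff_taylor]
    have h1 : (g.natDegree : ℝ) ≠ 0 := by positivity
    have h2 : g.leadingCoeff ≠ 0 := by
      rw [Ne, leadingCoeff_eq_zero]; rintro rfl; simp at hg
    have hs : adjShift f = adjShift g + δ := by
      rw [adjShift, adjShift, hn, hl]
      nth_rewrite 1 [hfg]
      rw [coeff_taylor_pred _ _ hg]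
      field_simp
    rw [adjRep_eq_taylor, adjRep_eq_taylor, hs]
    nth_rewrite 1 [hfg]
    rw [taylor_taylor, show -(adjShift g + δ) + δ = -adjShift g by ring]
  · intro h
    refine ⟨adjShift f - adjShift g, fun x => ?_⟩
    have := congrArg (eval (x + adjShift f)) h
    rw [adjRep_eq_taylor, adjRep_eq_taylor, taylor_eval, taylor_eval] at this
    ring_nf at this ⊢
    exact this

end Adjusted

/-! ### Brackets of the vector fields -/

section Fields

variable {V : Type} [Fintype V]

/-- The vector field `∑_v g_v(q_c - q_v + δ_v) ∂_{p_v}` of a tuple `g` of polynomials. -/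
def tupleField (c : V) (δ : V → ℝ) (g : V → ℝ[X]) : Phase V → Phase V :=
  fun x => (0, fun v => (g v).eval (x.1 c - x.1 v + δ v))

theorem contDiff_eval_comp (p : ℝ[X]) {l : Phase V → ℝ} (hl : ContDiff ℝ (⊤ : ℕ∞) l) :
    ContDiff ℝ (⊤ : ℕ∞) fun x => p.eval (l x) :=
  by
  have h := (p.contDiff_aeval (𝕜 := ℝ) (⊤ : ℕ∞)).comp hl
  simp only [coe_aeval_eq_eval] at h
  exact h

theorem contDiff_q (v : V) : ContDiff ℝ (⊤ : ℕ∞) fun x : Phase V => x.1 v :=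
  (contDiff_apply ℝ ℝ v).comp contDiff_fst

theorem contDiff_p (v : V) : ContDiff ℝ (⊤ : ℕ∞) fun x : Phase V => x.2 v :=
  (contDiff_apply ℝ ℝ v).comp contDiff_snd

theorem contDiff_arg (c v : V) (δ : ℝ) :
    ContDiff ℝ (⊤ : ℕ∞) fun x : Phase V => x.1 c - x.1 v + δ :=
  ((contDiff_q c).sub (contDiff_q v)).add contDiff_const

theorem fderiv_eq_of_line {Z : Phase V → Phase V} (hZ : ContDiff ℝ (⊤ : ℕ∞) Z)
    {x y w : Phase V} (h : HasDerivAt (fun t : ℝ => Z (x + t • y)) w 0) :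
    fderiv ℝ Z x y = w :=
  ((hZ.differentiable (by simp) x).hasFDerivAt.hasLineDerivAt y).unique h

theorem hasDerivAt_line_q {V : Type} (x y : Phase V) (v : V) :
    HasDerivAt (fun t : ℝ => (x + t • y).1 v) (y.1 v) 0 := by
  simpa using ((hasDerivAt_id (0 : ℝ)).mul_const (y.1 v)).const_add (x.1 v)

theorem hasDerivAt_line_p {V : Type} (x y : Phase V) (v : V) :
    HasDerivAt (fun t : ℝ => (x + t • y).2 v) (y.2 v) 0 := by
  simpa using ((hasDerivAt_id (0 : ℝ)).mul_const (y.2 v)).const_add (x.2 v)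

theorem hasDerivAt_eval_comp (p : ℝ[X]) {l : ℝ → ℝ} {l' t : ℝ} (h : HasDerivAt l l' t) :
    HasDerivAt (fun t => p.eval (l t)) ((derivative p).eval (l t) * l') t :=
  (p.hasDerivAt (l t)).comp t h

theorem contDiff_tupleField (c : V) (δ : V → ℝ) (g : V → ℝ[X]) :
    ContDiff ℝ (⊤ : ℕ∞) (tupleField c δ g) :=
  contDiff_const.prodMk (contDiff_pi.2 fun v => contDiff_eval_comp _ (contDiff_arg c v _))

theorem fderiv_tupleField (c : V) (δ : V → ℝ) (g : V → ℝ[X]) (x y : Phase V) :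
    fderiv ℝ (tupleField c δ g) x y =
      (0, fun v => (derivative (g v)).eval (x.1 c - x.1 v + δ v) * (y.1 c - y.1 v)) := by
  refine fderiv_eq_of_line (contDiff_tupleField c δ g) ?_
  refine (hasDerivAt_const _ _).prodMk (hasDerivAt_pi.2 fun v => ?_)
  simpa using hasDerivAt_eval_comp (g v)
    (((hasDerivAt_line_q x y c).sub (hasDerivAt_line_q x y v)).add_const (δ v))

theorem fderiv_dq [DecidableEq V] (c : V) (x y : Phase V) : fderiv ℝ (dq c) x y = 0 := by
  unfold dq; simp

theorem lieB_dq_tupleField [DecidableEq V] (c : V) (δ : V → ℝ) (g : V → ℝ[X])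
    (hg : g c = 0) :
    lieB (dq c) (tupleField c δ g) = tupleField c δ fun v => derivative (g v) := by
  funext x
  rw [lieB, fderiv_tupleField, fderiv_dq, sub_zero]
  refine Prod.ext rfl (funext fun v => ?_)
  by_cases hv : v = c
  · subst hv; simp [tupleField, hg]
  · simp [tupleField, dq, hv]

variable [DecidableEq V] (G : SimpleGraph V) [DecidableRel G.Adj]
  (γ : V → ℝ) (U : V → ℝ → ℝ) (Vp : V → V → ℝ[X])

theorem contDiff_deriv_of {f : ℝ → ℝ} (hf : ContDiff ℝ (⊤ : ℕ∞) f) :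
    ContDiff ℝ (⊤ : ℕ∞) (deriv f) :=
  (contDiff_infty_iff_deriv.1 hf).2

theorem contDiff_X0 (hU : ∀ v, ContDiff ℝ (⊤ : ℕ∞) (U v)) :
    ContDiff ℝ (⊤ : ℕ∞) (X0 G γ U Vp) := by
  refine contDiff_snd.prodMk (contDiff_pi.2 fun v => ?_)
  refine ((contDiff_const.mul (contDiff_p v)).sub
    ((contDiff_deriv_of (hU v)).comp (contDiff_q v))).sub ?_
  exact ContDiff.sum fun w _ => contDiff_eval_comp _ ((contDiff_q v).sub (contDiff_q w))

theorem fderiv_X0 (hU : ∀ v, ContDiff ℝ (⊤ : ℕ∞) (U v)) (x y : Phase V) :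
    fderiv ℝ (X0 G γ U Vp) x y =
      (y.2, fun v => -(γ v) * y.2 v - deriv (deriv (U v)) (x.1 v) * y.1 v -
        ∑ w ∈ Finset.univ.filter (fun w => G.Adj v w),
          (derivative (derivative (Vp v w))).eval (x.1 v - x.1 w) * (y.1 v - y.1 w)) := by
  refine fderiv_eq_of_line (contDiff_X0 G γ U Vp hU) ?_
  refine (hasDerivAt_pi.2 fun v => hasDerivAt_line_p x y v).prodMk (hasDerivAt_pi.2 fun v => ?_)
  refine ((((hasDerivAt_line_p x y v).const_mul (-(γ v))).sub ?_)).sub ?_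
  · have h : HasDerivAt (deriv (U v)) (deriv (deriv (U v)) (x.1 v))
        ((x + (0 : ℝ) • y).1 v) := by
      simpa using ((contDiff_deriv_of (hU v)).differentiable (by simp) (x.1 v)).hasDerivAt
    exact h.comp (0 : ℝ) (hasDerivAt_line_q x y v)
  · refine HasDerivAt.fun_sum fun w _ => ?_
    simpa using hasDerivAt_eval_comp (derivative (Vp v w))
      ((hasDerivAt_line_q x y v).sub (hasDerivAt_line_q x y w))

theorem lieB_tupleField_X0 (hU : ∀ v, ContDiff ℝ (⊤ : ℕ∞) (U v)) (c : V) (δ : V → ℝ)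
    (h : V → ℝ[X]) :
    lieB (tupleField c δ h) (X0 G γ U Vp) = fun x =>
      (fun v => (h v).eval (x.1 c - x.1 v + δ v),
       fun v => -(γ v) * (h v).eval (x.1 c - x.1 v + δ v) -
        (derivative (h v)).eval (x.1 c - x.1 v + δ v) * (x.2 c - x.2 v)) := by
  funext x
  rw [lieB, fderiv_X0 G γ U Vp hU, fderiv_tupleField]
  refine Prod.ext ?_ (funext fun v => ?_)
  · simp [tupleField]
  · simp [tupleField, X0]

/-- The two contributions to the double bracket, `g h'` and `g' h`, combine to `(g h)'`. -/
theorem lieB_lieB_X0 (hU : ∀ v, ContDiff ℝ (⊤ : ℕ∞) (U v)) (c : V) (δ : V → ℝ)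
    (g h : V → ℝ[X]) (hg : g c = 0) (hh : h c = 0) :
    lieB (tupleField c δ g) (lieB (tupleField c δ h) (X0 G γ U Vp)) =
      tupleField c δ fun v => derivative (g v * h v) := by
  funext x
  rw [lieB_tupleField_X0 G γ U Vp hU]
  have hZ : fderiv ℝ (fun x : Phase V =>
      ((fun v => (h v).eval (x.1 c - x.1 v + δ v),
       fun v => -(γ v) * (h v).eval (x.1 c - x.1 v + δ v) -
        (derivative (h v)).eval (x.1 c - x.1 v + δ v) * (x.2 c - x.2 v)) : Phase V)) x
      (tupleField c δ g x) =
      (0, fun v => (derivative (h v)).eval (x.1 c - x.1 v + δ v) *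
        (g v).eval (x.1 c - x.1 v + δ v)) := by
    refine fderiv_eq_of_line ?_ ?_
    · refine (contDiff_pi.2 fun v => contDiff_eval_comp _ (contDiff_arg c v _)).prodMk
        (contDiff_pi.2 fun v => ?_)
      exact (contDiff_const.mul (contDiff_eval_comp _ (contDiff_arg c v _))).sub
        ((contDiff_eval_comp _ (contDiff_arg c v _)).mul ((contDiff_p c).sub (contDiff_p v)))
    · have hl := fun v => ((hasDerivAt_line_q x (tupleField c δ g x) c).sub
        (hasDerivAt_line_q x (tupleField c δ g x) v)).add_const (δ v)
      refine (hasDerivAt_pi.2 fun v => ?_).prodMk (hasDerivAt_pi.2 fun v => ?_)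
      · simpa [tupleField] using hasDerivAt_eval_comp (h v) (hl v)
      · have := ((hasDerivAt_eval_comp (h v) (hl v)).const_mul (-(γ v))).fun_sub
          ((hasDerivAt_eval_comp (derivative (h v)) (hl v)).fun_mul
            ((hasDerivAt_line_p x (tupleField c δ g x) c).fun_sub
              (hasDerivAt_line_p x (tupleField c δ g x) v)))
        simpa [tupleField, hg] using this
  rw [lieB, hZ, fderiv_tupleField]
  refine Prod.ext ?_ (funext fun v => ?_)
  · simp [tupleField]
  · simp [tupleField, hh]
    ring

/-- The tuples `g` with `g_c = 0` whose vector field belongs to `𝓜`. -/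
def tupleSpace (Vstar : Finset V) (X₀ : Phase V → Phase V) (c : V) (δ : V → ℝ)
    (hc : MM Vstar X₀ (dp c)) : Submodule ℝ (V → ℝ[X]) where
  carrier := {g | g c = 0 ∧ MM Vstar X₀ (tupleField c δ g)}
  add_mem' := by
    rintro g h ⟨hg, hg'⟩ ⟨hh, hh'⟩
    refine ⟨by simp [hg, hh], ?_⟩
    convert MM.add hg' hh' using 1
    funext x
    refine Prod.ext ?_ (funext fun v => ?_) <;> simp [tupleField]
  zero_mem' := by
    refine ⟨rfl, ?_⟩
    convert MM.smul 0 hc using 1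
    funext x
    refine Prod.ext ?_ (funext fun v => ?_) <;> simp [tupleField]
  smul_mem' := by
    rintro r g ⟨hg, hg'⟩
    refine ⟨by simp [hg], ?_⟩
    convert MM.smul r hg' using 1
    funext x
    refine Prod.ext ?_ (funext fun v => ?_) <;> simp [tupleField]

theorem derivClosed_tupleSpace (Vstar : Finset V) (hU : ∀ v, ContDiff ℝ (⊤ : ℕ∞) (U v))
    (c : V) (δ : V → ℝ) (hc : Controllable Vstar (X0 G γ U Vp) c) :
    DerivClosed (tupleSpace Vstar (X0 G γ U Vp) c δ hc.2) where
  deriv := by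
    rintro g ⟨hg, hg'⟩
    refine ⟨by simp [hg], ?_⟩
    rw [← lieB_dq_tupleField c δ g hg]
    exact MM.lie hc.1 hg'
  prod := by
    rintro g ⟨hg, hg'⟩ h ⟨hh, hh'⟩
    refine ⟨by simp [hg], ?_⟩
    rw [← lieB_lieB_X0 G γ U Vp hU c δ g h hg hh]
    exact MM.lie hg' (MM.lieX hh')

/-- Up to a smooth multiple of `∂_{p_c}`, the bracket `[∂_{q_c}, X₀]` is
`∑_{v ∈ 𝒯} V''_{cv}(q_c - q_v) ∂_{p_v}`, which is the field of the tuple of adjusted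
representatives. -/
theorem adjusted_tuple_mem (Vstar : Finset V) (hU : ∀ v, ContDiff ℝ (⊤ : ℕ∞) (U v))
    (hsym : ∀ u v, G.Adj u v → ∀ x : ℝ, (Vp v u).eval x = (Vp u v).eval (-x))
    (c : V) (hc : Controllable Vstar (X0 G γ U Vp) c) :
    (fun v => if v ∈ Tset G c then ft Vp c v else 0) ∈
      tupleSpace Vstar (X0 G γ U Vp) c
        (fun v => adjShift (derivative (derivative (Vp c v)))) hc.2 := by
  refine ⟨by simp [Tset], ?_⟩
  let κ : Phase V → ℝ := fun x => deriv (deriv (U c)) (x.1 c) +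
    ∑ w ∈ Finset.univ.filter (fun w => G.Adj c w),
      (derivative (derivative (Vp c w))).eval (x.1 c - x.1 w)
  have hκ : ContDiff ℝ (⊤ : ℕ∞) κ :=
    ((contDiff_deriv_of (contDiff_deriv_of (hU c))).comp (contDiff_q c)).add
      (ContDiff.sum fun w _ => contDiff_eval_comp _ ((contDiff_q c).sub (contDiff_q w)))
  have hsym2 : ∀ v, G.Adj c v → ∀ x : ℝ,
      (derivative (derivative (Vp v c))).eval x = (derivative (derivative (Vp c v))).eval (-x) := by
    intro v hv x
    have : Vp v c = (Vp c v).comp (-X) :=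
      Polynomial.funext fun x => by rw [hsym c v hv x]; simp
    rw [this]
    simp [derivative_comp]
  convert MM.add (MM.lieX hc.1) (MM.mulS κ hκ hc.2) using 1
  funext x
  rw [Pi.add_apply, lieB, fderiv_X0 G γ U Vp hU, fderiv_dq, sub_zero]
  refine Prod.ext ?_ (funext fun v => ?_)
  · simp [tupleField, dq, dp]
  · by_cases hv : v = c
    · subst hv
      have : ∀ w ∈ Finset.univ.filter (fun w => G.Adj v w),
          (derivative (derivative (Vp v w))).eval (x.1 v - x.1 w) *
            ((dq v x).1 v - (dq v x).1 w) =
          (derivative (derivative (Vp v w))).eval (x.1 v - x.1 w) := by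
        intro w hw
        have hw' : w ≠ v := (G.ne_of_adj (Finset.mem_filter.1 hw).2).symm
        simp [dq, hw']
      simp only [Prod.snd_add, Pi.add_apply]
      rw [Finset.sum_congr rfl this]
      simp [tupleField, dq, dp, Tset, κ]
    · have : ∀ w, (dq c x).1 v - (dq c x).1 w = if w = c then -1 else 0 := by
        intro w
        by_cases hw : w = c
        · simp [dq, hv, hw]
        · simp [dq, hv, hw]
      simp only [Prod.snd_add, Pi.add_apply, this]
      by_cases hadj : G.Adj c v
      · simp [tupleField, dq, dp, Tset, hv, hadj, hadj.symm, hsym2 v hadj, ft, adjRep]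
      · have : ¬ G.Adj v c := fun h => hadj h.symm
        simp [tupleField, dq, dp, Tset, hv, hadj, this]

end Fields

/-- Theorem 4.3, first part. If `c` is controllable, then each
equivalence class `𝒯_i` of neighbors of `c` (the class of `v₀ ∈ 𝒯` consists of those
`w ∈ 𝒯` whose `V''_{cw}` is equivalent to `V''_{cv₀}`) is jointly controllable. -/
theorem equivClass_jointly_controllable
    {V : Type} [Fintype V] [DecidableEq V] (G : SimpleGraph V) [DecidableRel G.Adj]
    (Vstar : Finset V) (γ : V → ℝ) (U : V → ℝ → ℝ) (Vp : V → V → Polynomial ℝ)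
    (hγpos : ∀ v ∈ Vstar, 0 < γ v) (hγ0 : ∀ v ∉ Vstar, γ v = 0)
    (hU : ∀ v, ContDiff ℝ (⊤ : ℕ∞) (U v))
    (hsym : ∀ u v, G.Adj u v → ∀ x : ℝ, (Vp v u).eval x = (Vp u v).eval (-x))
    (hdeg : ∀ u v, G.Adj u v → 3 ≤ (Vp u v).natDegree)
    (c : V) (hc : Controllable Vstar (X0 G γ U Vp) c) :
    ∀ v₀ ∈ Tset G c,
      MM Vstar (X0 G γ U Vp)
        (dpSum ((Tset G c).filter fun w =>
          PolyEquiv (derivative (derivative (Vp c w))) (derivative (derivative (Vp c v₀))))) := by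
  intro v₀ hv₀
  have hdeg2 : ∀ v ∈ Tset G c, 1 ≤ (derivative (derivative (Vp c v))).natDegree := by
    intro v hv
    have h1 := hdeg c v (by simpa [Tset] using hv)
    have h2 : 1 ≤ (Vp c v).natDegree - 1 - 1 := by omega
    simpa only [natDegree_derivative] using h2
  have key := class_indicator_mem
    (derivClosed_tupleSpace G γ U Vp Vstar hU c
      (fun v => adjShift (derivative (derivative (Vp c v)))) hc) (ft Vp c) (Tset G c)
    (fun v hv => by rw [ft, natDegree_adjRep]; exact hdeg2 v hv)
    (fun v hv => by rw [ft, natDegree_adjRep]; exact coeff_adjRep_pred _ (hdeg2 v hv))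
    (adjusted_tuple_mem G γ U Vp Vstar hU hsym c hc) v₀ hv₀
  convert key.2 using 1
  funext x
  refine Prod.ext rfl (funext fun v => ?_)
  have hiff : (v ∈ Tset G c ∧ PolyEquiv (derivative (derivative (Vp c v)))
      (derivative (derivative (Vp c v₀)))) ↔ (v ∈ Tset G c ∧ ft Vp c v = ft Vp c v₀) :=
    and_congr_right fun hv => polyEquiv_iff_adjRep_eq _ _ (hdeg2 v hv)
  simp only [dpSum, tupleField, Finset.sum_apply, Pi.single_apply, Finset.sum_ite_eq,
    Finset.mem_filter, hiff]
  split_ifs <;> simp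
end
end

section
/- Assume the vertex c is controllable and let g_v : ℝ → ℝ, v ∈ 𝒯, be smooth functions. If the vector field ∑_{v∈𝒯} g_v(x_v) ∂_{p_v} belongs to 𝓜, then the vector field ∑_{v∈𝒯} g_v'(x_v) ∂_{p_v} belongs to 𝓜. -/
/-!
Controllability of `c` puts the constant field `∂_{q_c}` in `𝓜`, so `𝓜` contains the bracket of
`∂_{q_c}` with `∑_{v∈𝒯} g_v(x_v) ∂_{p_v}`. As `∂_{q_c}` is constant, this bracket is the derivative
of the second field in the direction `q_c`. A neighbor `v` of `c` differs from `c`, hence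
`∂_{q_c} x_v = 1`, and the chain rule gives exactly `∑_{v∈𝒯} g_v'(x_v) ∂_{p_v}`.
-/

open scoped Classical
open Polynomial

noncomputable section

/-- Lemma 4.6. Let `c` be controllable and `g_v`, `v ∈ 𝒯`, smooth.
If `∑_{v∈𝒯} g_v(x_v) ∂_{p_v} ∈ 𝓜` then `∑_{v∈𝒯} g_v'(x_v) ∂_{p_v} ∈ 𝓜`,
where `x_v = q_c − q_v + δ_{cv}` for real constants `δ_{cv}`. -/
theorem derivative_field_mem
    {V : Type} [Fintype V] [DecidableEq V] (G : SimpleGraph V) [DecidableRel G.Adj]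
    (Vstar : Finset V) (γ : V → ℝ) (U : V → ℝ → ℝ) (Vp : V → V → Polynomial ℝ)
    (hγpos : ∀ v ∈ Vstar, 0 < γ v) (hγ0 : ∀ v ∉ Vstar, γ v = 0)
    (hU : ∀ v, ContDiff ℝ (⊤ : ℕ∞) (U v))
    (hsym : ∀ u v, G.Adj u v → ∀ x : ℝ, (Vp v u).eval x = (Vp u v).eval (-x))
    (hdeg : ∀ u v, G.Adj u v → 3 ≤ (Vp u v).natDegree)
    (c : V) (hc : Controllable Vstar (X0 G γ U Vp) c)
    (δ : V → ℝ) (g : V → ℝ → ℝ) (hg : ∀ v, ContDiff ℝ (⊤ : ℕ∞) (g v))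
    (hmem : MM Vstar (X0 G γ U Vp)
      (fun x => ((0 : V → ℝ),
        ∑ v ∈ Tset G c, Pi.single v (g v (x.1 c - x.1 v + δ v))))) :
    MM Vstar (X0 G γ U Vp)
      (fun x => ((0 : V → ℝ),
        ∑ v ∈ Tset G c, Pi.single v (deriv (g v) (x.1 c - x.1 v + δ v)))) := by
  -- `∂_{q_c}` is constant, so its bracket with the given field is the plain derivative in `q_c`.
  have key := MM.lie hc.1 hmem
  convert key using 1
  funext x
  have hconst : fderiv ℝ (dq c) x = 0 := (hasFDerivAt_const _ _).fderiv
  have hder : HasFDerivAt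
      (fun y : Phase V => ((0 : V → ℝ),
        ∑ v ∈ Tset G c, (Pi.single v (g v (y.1 c - y.1 v + δ v)) : V → ℝ)))
      ((0 : Phase V →L[ℝ] (V → ℝ)).prod (∑ v ∈ Tset G c,
        (ContinuousLinearMap.single ℝ (fun _ : V => ℝ) v).comp
          (deriv (g v) (x.1 c - x.1 v + δ v) •
            ((ContinuousLinearMap.proj (R := ℝ) (φ := fun _ : V => ℝ) c -
              ContinuousLinearMap.proj (R := ℝ) (φ := fun _ : V => ℝ) v).comp
                (ContinuousLinearMap.fst ℝ (V → ℝ) (V → ℝ)))))) x := by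
    refine (hasFDerivAt_const _ _).prodMk (HasFDerivAt.fun_sum fun v _ => ?_)
    have hlin : HasFDerivAt (fun y : Phase V => y.1 c - y.1 v + δ v)
        ((ContinuousLinearMap.proj (R := ℝ) (φ := fun _ : V => ℝ) c -
          ContinuousLinearMap.proj (R := ℝ) (φ := fun _ : V => ℝ) v).comp
            (ContinuousLinearMap.fst ℝ (V → ℝ) (V → ℝ))) x :=
      HasFDerivAt.add_const (δ v) (ContinuousLinearMap.hasFDerivAt
        ((ContinuousLinearMap.proj (R := ℝ) (φ := fun _ : V => ℝ) c -
          ContinuousLinearMap.proj (R := ℝ) (φ := fun _ : V => ℝ) v).comp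
            (ContinuousLinearMap.fst ℝ (V → ℝ) (V → ℝ))))
    have hgd : HasDerivAt (g v) (deriv (g v) (x.1 c - x.1 v + δ v)) (x.1 c - x.1 v + δ v) :=
      ((hg v).differentiable (by simp) _).hasDerivAt
    exact (ContinuousLinearMap.single ℝ (fun _ : V => ℝ) v).hasFDerivAt.comp x
      (hgd.comp_hasFDerivAt x hlin)
  rw [lieB, hder.fderiv, hconst]
  simp only [dq, _root_.zero_apply, sub_zero, ContinuousLinearMap.prod_apply,
    _root_.sum_apply]
  refine Prod.ext rfl (Finset.sum_congr rfl fun v hv => ?_)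
  -- `G` has no loops, so `q_v` is constant along `∂_{q_c}` and `∂_{q_c} x_v = 1`.
  have hvc : v ≠ c := by
    rintro rfl
    simp [Tset] at hv
  simp [hvc, ← Pi.single_smul]
end
end

section
/- Let g_v, h_v : ℝ → ℝ, v ∈ 𝒯, be smooth functions. Then the double commutator satisfies ⟪ ∑_{v∈𝒯} g_v(x_v) ∂_{p_v}, ∑_{v'∈𝒯} h_{v'}(x_{v'}) ∂_{p_{v'}} ⟫ = ∑_{v∈𝒯} (g_v h_v)'(x_v) ∂_{p_v}, as an identity of vector fields on ℝ^{2|V|}. -/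
/-!
Both diagonal fields have the form `(q, p) ↦ (0, A q)`, while the drift has the form
`(q, p) ↦ (p, L p + F q)` with `L` linear. For such fields
`[X₀, (0, A)] = (-A, DA·p - L A)`, whose `p`-derivative in the direction `B` is `DA·B`, so that
`[[X₀, (0, A)], (0, B)] = (0, -(DB·A + DA·B))` (`lieB_lieB_vertical`): neither `L` nor `F`
survives. For a diagonal `A`, the `v`-component of `DA·B` is `g_v'(x_v) (B_c - B_v)`
(`fderiv_diagField`); since `c` is not its own neighbor, `A_c = B_c = 0`, and the `v`-component of
`-(DB·A + DA·B)` is `h_v' g_v + g_v' h_v = (g_v h_v)'` at `x_v`.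
-/

open scoped Classical
open Polynomial

noncomputable section

/-- The double commutator of two vertical fields depending only on the positions does not see the
friction `L` and the force `F` of the drift. -/
lemma lieB_lieB_vertical {V : Type} [Fintype V] (L : (V → ℝ) →L[ℝ] (V → ℝ))
    {F A B : (V → ℝ) → (V → ℝ)} (hF : Differentiable ℝ F) (hA : ContDiff ℝ 2 A)
    (hB : Differentiable ℝ B) :
    lieB (lieB (fun x : Phase V => (x.2, L x.2 + F x.1)) (fun x => (0, A x.1)))
        (fun x => (0, B x.1))
      = fun x => (0, -(fderiv ℝ B x.1 (A x.1) + fderiv ℝ A x.1 (B x.1))) := by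
  have hA1 : Differentiable ℝ A := hA.differentiable (by norm_num)
  have hA2 : Differentiable ℝ (fderiv ℝ A) :=
    (hA.fderiv_right (m := 1) (by norm_num)).differentiable (by norm_num)
  have vert : ∀ {C : (V → ℝ) → (V → ℝ)}, Differentiable ℝ C → ∀ x : Phase V,
      HasFDerivAt (fun x : Phase V => ((0 : V → ℝ), C x.1))
        ((0 : Phase V →L[ℝ] (V → ℝ)).prod
          ((fderiv ℝ C x.1).comp (ContinuousLinearMap.fst ℝ _ _))) x := fun hC x =>
    (hasFDerivAt_const _ _).prodMk ((hC x.1).hasFDerivAt.comp x hasFDerivAt_fst)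
  have hX : ∀ x : Phase V,
      HasFDerivAt (fun x : Phase V => (x.2, L x.2 + F x.1))
        ((ContinuousLinearMap.snd ℝ _ _).prod
          (L.comp (ContinuousLinearMap.snd ℝ _ _) +
            (fderiv ℝ F x.1).comp (ContinuousLinearMap.fst ℝ _ _))) x := fun x =>
    hasFDerivAt_snd.prodMk
      ((L.hasFDerivAt.comp x hasFDerivAt_snd).add ((hF x.1).hasFDerivAt.comp x hasFDerivAt_fst))
  have inner : lieB (fun x : Phase V => (x.2, L x.2 + F x.1)) (fun x => (0, A x.1))
      = fun x => (-A x.1, fderiv ℝ A x.1 x.2 - L (A x.1)) := by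
    funext x
    simp [lieB, (vert hA1 x).fderiv, (hX x).fderiv]
  have hI : ∀ x : Phase V, HasFDerivAt
      (fun x : Phase V => (-A x.1, fderiv ℝ A x.1 x.2 - L (A x.1))) _ x := fun x =>
    ((hA1 x.1).hasFDerivAt.comp x hasFDerivAt_fst).neg.prodMk
      ((((hA2 x.1).hasFDerivAt.comp x hasFDerivAt_fst).clm_apply hasFDerivAt_snd).sub
        (L.hasFDerivAt.comp x ((hA1 x.1).hasFDerivAt.comp x hasFDerivAt_fst)))
  rw [inner]
  funext x
  simp [lieB, (vert hB x).fderiv, (hI x).fderiv]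
  abel

/-- The momentum part `∑_{v ∈ 𝒯} g_v(q_c - q_v + δ_v) ∂_{p_v}` of a diagonal field, as a function
of the positions. -/
def diagField {V : Type} [Fintype V] [DecidableEq V] (T : Finset V) (c : V) (δ : V → ℝ)
    (g : V → ℝ → ℝ) (q : V → ℝ) : V → ℝ :=
  ∑ v ∈ T, Pi.single v (g v (q c - q v + δ v))

lemma diagField_apply {V : Type} [Fintype V] [DecidableEq V] (T : Finset V) (c : V) (δ : V → ℝ)
    (g : V → ℝ → ℝ) (q : V → ℝ) (w : V) :
    diagField T c δ g q w = if w ∈ T then g w (q c - q w + δ w) else 0 := by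
  simp [diagField, Finset.sum_apply, Pi.single_apply]

lemma contDiff_diagField {V : Type} [Fintype V] [DecidableEq V] (T : Finset V) (c : V)
    (δ : V → ℝ) {g : V → ℝ → ℝ} (hg : ∀ v, ContDiff ℝ (⊤ : ℕ∞) (g v)) :
    ContDiff ℝ (⊤ : ℕ∞) (diagField T c δ g) := by
  rw [contDiff_pi]
  intro w
  simp only [diagField_apply]
  by_cases hw : w ∈ T
  · simp only [hw, if_true]
    exact (hg w).comp (by fun_prop)
  · simp only [hw, if_false]
    exact contDiff_const

lemma fderiv_diagField {V : Type} [Fintype V] [DecidableEq V] (T : Finset V) (c : V)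
    (δ : V → ℝ) {g : V → ℝ → ℝ} (hg : ∀ v, ContDiff ℝ (⊤ : ℕ∞) (g v)) (q b : V → ℝ) (w : V) :
    fderiv ℝ (diagField T c δ g) q b w
      = if w ∈ T then deriv (g w) (q c - q w + δ w) * (b c - b w) else 0 := by
  have hd : DifferentiableAt ℝ (diagField T c δ g) q :=
    (contDiff_diagField T c δ hg).differentiable (by simp) q
  have hw : fderiv ℝ (diagField T c δ g) q b w
      = fderiv ℝ (fun q => diagField T c δ g q w) q b := by
    rw [fderiv_apply hd]; rfl
  rw [hw]
  simp only [diagField_apply]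
  by_cases hT : w ∈ T
  · simp only [hT, if_true]
    have hl : HasFDerivAt (fun q : V → ℝ => q c - q w + δ w)
        (ContinuousLinearMap.proj (R := ℝ) (φ := fun _ : V => ℝ) c
          - ContinuousLinearMap.proj w) q :=
      ((hasFDerivAt_apply c q).sub (hasFDerivAt_apply w q)).add_const _
    have hgd : HasDerivAt (g w) (deriv (g w) (q c - q w + δ w)) (q c - q w + δ w) :=
      ((hg w).differentiable (by simp) _).hasDerivAt
    have := (hgd.comp_hasFDerivAt q hl).fderiv
    simp only [Function.comp_def] at this
    simp [this]
  · simp [hT]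

/-- Lemma 4.8. For smooth functions `g_v, h_v`, `v ∈ 𝒯`, the double
commutator `⟪Y, Z⟫ = [[X₀, Y], Z]` of the diagonal fields `Y = ∑_{v∈𝒯} g_v(x_v) ∂_{p_v}`
and `Z = ∑_{v'∈𝒯} h_{v'}(x_{v'}) ∂_{p_{v'}}` equals `∑_{v∈𝒯} (g_v h_v)'(x_v) ∂_{p_v}`,
where `x_v = q_c − q_v + δ_{cv}` for real constants `δ_{cv}`. -/
theorem double_commutator_diagonal
    {V : Type} [Fintype V] [DecidableEq V] (G : SimpleGraph V) [DecidableRel G.Adj]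
    (Vstar : Finset V) (γ : V → ℝ) (U : V → ℝ → ℝ) (Vp : V → V → Polynomial ℝ)
    (hγpos : ∀ v ∈ Vstar, 0 < γ v) (hγ0 : ∀ v ∉ Vstar, γ v = 0)
    (hU : ∀ v, ContDiff ℝ (⊤ : ℕ∞) (U v))
    (hsym : ∀ u v, G.Adj u v → ∀ x : ℝ, (Vp v u).eval x = (Vp u v).eval (-x))
    (hdeg : ∀ u v, G.Adj u v → 3 ≤ (Vp u v).natDegree)
    (c : V) (δ : V → ℝ) (g h : V → ℝ → ℝ)
    (hg : ∀ v, ContDiff ℝ (⊤ : ℕ∞) (g v)) (hh : ∀ v, ContDiff ℝ (⊤ : ℕ∞) (h v)) :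
    lieB
      (lieB (X0 G γ U Vp)
        (fun x => ((0 : V → ℝ),
          ∑ v ∈ Tset G c, Pi.single v (g v (x.1 c - x.1 v + δ v)))))
      (fun x => ((0 : V → ℝ),
        ∑ v ∈ Tset G c, Pi.single v (h v (x.1 c - x.1 v + δ v))))
    = fun x => ((0 : V → ℝ),
        ∑ v ∈ Tset G c,
          Pi.single v (deriv (fun t => g v t * h v t) (x.1 c - x.1 v + δ v))) := by
  let F : (V → ℝ) → (V → ℝ) := fun q v => -deriv (U v) (q v) -
    ∑ w ∈ Finset.univ.filter (fun w => G.Adj v w), (derivative (Vp v w)).eval (q v - q w)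
  let L : (V → ℝ) →L[ℝ] (V → ℝ) :=
    ContinuousLinearMap.pi fun v => (-γ v) • ContinuousLinearMap.proj v
  have hX : X0 G γ U Vp = fun x => (x.2, L x.2 + F x.1) := by
    funext x
    refine Prod.ext rfl (funext fun v => ?_)
    simp [X0, L, F]
    ring
  have hF : Differentiable ℝ F := by
    have hU' : ∀ v, Differentiable ℝ (deriv (U v)) := fun v =>
      (((contDiff_infty_iff_deriv (𝕜 := ℝ)).1 (hU v)).2).differentiable (by simp)
    rw [differentiable_pi]
    intro v
    refine ((hU' v).comp (differentiable_apply v)).neg.sub (Differentiable.fun_sum fun w _ => ?_)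
    exact (derivative (Vp v w)).differentiable.comp (by fun_prop)
  rw [hX]
  refine (lieB_lieB_vertical L hF
    (contDiff_infty.1 (contDiff_diagField (Tset G c) c δ hg) 2)
    ((contDiff_diagField (Tset G c) c δ hh).differentiable (by simp))).trans ?_
  funext x
  refine Prod.ext rfl (funext fun w => ?_)
  change _ = diagField (Tset G c) c δ (fun v => deriv fun t => g v t * h v t) x.1 w
  have hc : c ∉ Tset G c := by simp [Tset]
  simp only [Pi.neg_apply, Pi.add_apply, fderiv_diagField _ _ _ hg, fderiv_diagField _ _ _ hh,
    diagField_apply, hc, if_false]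
  by_cases hw : w ∈ Tset G c
  · simp only [hw, if_true]
    rw [deriv_fun_mul ((hg w).differentiable (by simp) _) ((hh w).differentiable (by simp) _)]
    ring
  · simp [hw]
end
end
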